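/- arXiv:2204.04185 — 2 statements merged into one kernel-verified Lean document; each statement's English description precedes it below -/
import Mathlib

section
/- There exists a universal constant C such that for every finite connected simple graph G on N vertices and every permutation π of V(G), the swap routing time satisfies rt_S(G,π) ≤ C·N. -/
/-!
Fix a spanning tree of `G` rooted at `r` and number its vertices in postorder, so that the rank
increases towards the root and every subtree is an interval of ranks.  The permutation is sorted one
vertex at a time in order of rank: step `i` moves the token wanted at the vertex `v` of rank `i` from
its current place `x`, which has rank at least `i`, to `v` along the tree path from `x` up to the
lowest common ancestor `m` and down to `v`.  This yields a word in edge transpositions whose length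
may be quadratic, but the word can be executed in parallel in linear time.

The swap of step `i` on the edge from `u` to its parent gets the time `3i + N + 2 depth(m) - depth(u)`
on the way up and `3i + N + depth(u)` on the way down, so the token passes `m` at about time
`3i + N + depth(m)`.  All times are at most `6N`.  The claim is that two swaps of the word
which share a vertex have strictly increasing times (`entry_lt_or_disjoint`); then swaps of equal time
form a matching, and reordering the word by time does not change its product (`schedule`).
The claim rests on one consequence of the interval property: if `i < j` and a subtree contains
the target of step `i` and the source of step `j`, it also contains the target of step `j`, whose
rank lies in between.  Hence the upward part of step `j` meets the downward part of
step `i` at most at its top vertex, and when the upward parts of both steps meet, the top of `j`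
is at least as deep as the top of `i`.
-/

/-- A swap round on `G`: a permutation that is a product of transpositions along a
matching of `G`, i.e. an involution moving every non-fixed vertex to a neighbor. -/
def IsSwapRound {V : Type*} (G : SimpleGraph V) (σ : Equiv.Perm V) : Prop :=
  σ * σ = 1 ∧ ∀ v, σ v ≠ v → G.Adj v (σ v)

/-- The swap routing time of a permutation `π` on `G`: the least number of swap rounds
whose product is `π`. -/
noncomputable def rtS {V : Type*} (G : SimpleGraph V) (π : Equiv.Perm V) : ℕ :=
  sInf {T : ℕ | ∃ L : List (Equiv.Perm V), L.length = T ∧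
    (∀ σ ∈ L, IsSwapRound G σ) ∧ L.prod = π}

/-! ### Parallelising a word of swaps -/

lemma IsSwapRound.one {V : Type*} (G : SimpleGraph V) : IsSwapRound G 1 :=
  ⟨by simp, fun v h => absurd rfl h⟩

lemma IsSwapRound.mul {V : Type*} {G : SimpleGraph V} {σ τ : Equiv.Perm V}
    (hσ : IsSwapRound G σ) (hτ : IsSwapRound G τ) (h : σ.Disjoint τ) :
    IsSwapRound G (σ * τ) := by
  refine ⟨?_, fun v hv => ?_⟩
  · have hc : σ * τ = τ * σ := h.commute
    calc σ * τ * (σ * τ) = σ * τ * (τ * σ) := by rw [hc]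
      _ = σ * (τ * τ) * σ := by group
      _ = 1 := by rw [hτ.1, mul_one, hσ.1]
  · rcases h v with h1 | h1
    · have hc : (σ * τ) v = (τ * σ) v := by rw [h.commute.eq]
      have h2 : (τ * σ) v = τ v := by rw [Equiv.Perm.mul_apply, h1]
      rw [hc, h2] at hv ⊢
      exact hτ.2 v hv
    · have h2 : (σ * τ) v = σ v := by rw [Equiv.Perm.mul_apply, h1]
      rw [h2] at hv ⊢
      exact hσ.2 v hv

lemma IsSwapRound.list_prod {V : Type*} {G : SimpleGraph V} (L : List (Equiv.Perm V))
    (h : ∀ σ ∈ L, IsSwapRound G σ) (hd : L.Pairwise Equiv.Perm.Disjoint) :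
    IsSwapRound G L.prod := by
  induction L with
  | nil => exact IsSwapRound.one G
  | cons σ L ih =>
    rw [List.pairwise_cons] at hd
    rw [List.prod_cons]
    exact (h σ (by simp)).mul (ih (fun τ hτ => h τ (by simp [hτ])) hd.2)
      (Equiv.Perm.disjoint_prod_right L hd.1)

/-- The factors of maximal time can be moved to the end of the word. -/
lemma split_last {V α : Type*} (f : α → Equiv.Perm V) (t : α → ℕ) (T : ℕ) (L : List α)
    (hp : L.Pairwise (fun a b => t a < t b ∨ (f a).Disjoint (f b)))
    (ht : ∀ a ∈ L, t a < T + 1) :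
    (L.map f).prod =
      ((L.filter (fun a => t a < T)).map f).prod * ((L.filter (fun a => ¬ t a < T)).map f).prod := by
  induction L with
  | nil => simp
  | cons a L ih =>
    rw [List.pairwise_cons] at hp
    have ih' := ih hp.2 (fun b hb => ht b (by simp [hb]))
    by_cases h : t a < T
    · simp only [List.map_cons, List.prod_cons, List.filter_cons, h, decide_true, if_true,
        not_true, decide_false]
      rw [ih', mul_assoc]
      simp
    · simp only [List.map_cons, List.prod_cons, List.filter_cons, h, decide_true, if_true,
        not_false_eq_true, decide_false]
      have hd : (f a).Disjoint ((L.filter (fun b => t b < T)).map f).prod := by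
        refine Equiv.Perm.disjoint_prod_right _ fun g hg => ?_
        obtain ⟨b, hb, rfl⟩ := List.mem_map.1 hg
        have hb' := (List.mem_filter.1 hb).1
        rcases hp.1 b hb' with h1 | h1
        · have := ht b (by simp [hb'])
          omega
        · exact h1
      rw [ih', ← mul_assoc, hd.commute.eq, mul_assoc]
      simp

/-- A word of swap rounds with times below `T`, in which overlapping factors occur at strictly
increasing times, is a product of `T` swap rounds. -/
lemma schedule {V α : Type*} (G : SimpleGraph V) (f : α → Equiv.Perm V) (t : α → ℕ) (T : ℕ)
    (L : List α) (hr : ∀ a ∈ L, IsSwapRound G (f a))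
    (hp : L.Pairwise (fun a b => t a < t b ∨ (f a).Disjoint (f b)))
    (ht : ∀ a ∈ L, t a < T) :
    ∃ M : List (Equiv.Perm V), M.length = T ∧ (∀ σ ∈ M, IsSwapRound G σ) ∧
      M.prod = (L.map f).prod := by
  induction T generalizing L with
  | zero =>
    have : L = [] := List.eq_nil_iff_forall_not_mem.2 fun a ha => by simpa using ht a ha
    subst this
    exact ⟨[], rfl, by simp, by simp⟩
  | succ T ih =>
    obtain ⟨M, hM, hMr, hMp⟩ := ih (L.filter (fun a => t a < T))
      (fun a ha => hr a (List.mem_filter.1 ha).1) (hp.filter _)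
      (fun a ha => by simpa using (List.mem_filter.1 ha).2)
    have hlast : IsSwapRound G ((L.filter (fun a => ¬ t a < T)).map f).prod := by
      apply IsSwapRound.list_prod
      · intro σ hσ
        obtain ⟨a, ha, rfl⟩ := List.mem_map.1 hσ
        exact hr a (List.mem_filter.1 ha).1
      · rw [List.pairwise_map]
        refine (hp.filter _).imp_of_mem fun {a b} ha hb hab => ?_
        have ha1 := (List.mem_filter.1 ha).2
        have hb1 := ht b (List.mem_filter.1 hb).1
        simp only [not_lt, decide_eq_true_eq] at ha1
        rcases hab with h | h
        · omega
        · exact h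
    refine ⟨M ++ [((L.filter (fun a => ¬ t a < T)).map f).prod], by simp [hM], ?_, ?_⟩
    · intro σ hσ
      rcases List.mem_append.1 hσ with h | h
      · exact hMr σ h
      · rw [List.mem_singleton.1 h]
        exact hlast
    · rw [List.prod_append, List.prod_singleton, hMp, ← split_last f t T L hp ht]

/-! ### Postordered spanning trees -/

/-- `Below par a b`: the vertex `b` lies in the subtree rooted at `a`, for the tree given by the parent
function `par`. -/
def Below {V : Type*} (par : V → V) (a b : V) : Prop := ∃ k, par^[k] b = a

/-- A spanning tree, rooted at `r`, of the subgraph of `G` induced on `S`, with parent function `par`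
(where `par r = r`), depth `d`, and postorder rank `ρ`. -/
structure PTree {V : Type*} (G : SimpleGraph V) (S : Finset V) (r : V) (par : V → V)
    (d ρ : V → ℕ) : Prop where
  root_mem : r ∈ S
  par_root : par r = r
  par_mem : ∀ u ∈ S, par u ∈ S
  adj : ∀ u ∈ S, u ≠ r → G.Adj u (par u)
  depth : ∀ u ∈ S, u ≠ r → d u = d (par u) + 1
  rank : ∀ u ∈ S, u ≠ r → ρ u < ρ (par u)
  depth_lt : ∀ u ∈ S, d u < S.card
  rank_lt : ∀ u ∈ S, ρ u < S.card
  inj : ∀ u ∈ S, ∀ w ∈ S, ρ u = ρ w → u = w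
  convex : ∀ a ∈ S, ∀ b ∈ S, ∀ m ∈ S, ∀ c ∈ S, Below par a b → Below par a c →
    ρ b ≤ ρ m → ρ m ≤ ρ c → Below par a m

lemma Below.refl {V : Type*} (par : V → V) (a : V) : Below par a a := ⟨0, rfl⟩

lemma Below.step {V : Type*} {par : V → V} {a b : V} (h : Below par a b) : Below par (par a) b := by
  obtain ⟨k, rfl⟩ := h
  exact ⟨k + 1, Function.iterate_succ_apply' _ _ _⟩

lemma Below.trans {V : Type*} {par : V → V} {a b c : V} (h : Below par a b) (h' : Below par b c) :
    Below par a c := by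
  obtain ⟨k, rfl⟩ := h
  obtain ⟨l, rfl⟩ := h'
  exact ⟨k + l, Function.iterate_add_apply _ _ _ _⟩

/-- A new leaf `v` below `p` is ranked immediately before `p`. -/
lemma PTree.insert_leaf {V : Type*} [DecidableEq V] {G : SimpleGraph V} {S : Finset V} {r : V}
    {par : V → V} {d ρ : V → ℕ} (h : PTree G S r par d ρ) {p v : V} (hp : p ∈ S) (hv : v ∉ S)
    (hadj : G.Adj v p) :
    PTree G (insert v S) r (Function.update par v p) (Function.update d v (d p + 1))
      (Function.update (fun w => if ρ p ≤ ρ w then ρ w + 1 else ρ w) v (ρ p)) := by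
  have hne : ∀ u ∈ S, u ≠ v := fun u hu e => hv (e ▸ hu)
  have hpar : ∀ u ∈ S, Function.update par v p u = par u := fun u hu => by simp [hne u hu]
  have hiter : ∀ k, ∀ u ∈ S, (Function.update par v p)^[k] u = par^[k] u ∧ par^[k] u ∈ S := by
    intro k
    induction k with
    | zero => intro u hu; simpa using hu
    | succ k ih =>
      intro u hu
      rw [Function.iterate_succ_apply, Function.iterate_succ_apply, hpar u hu]
      exact ih _ (h.par_mem u hu)
  have hvr : r ≠ v := hne r h.root_mem
  have hcard : (insert v S).card = S.card + 1 := Finset.card_insert_of_notMem hv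
  -- Collapsing `v` to `p` preserves membership in subtrees rooted in `S`, and the order of ranks.
  let φ : V → V := fun w => if w = v then p else w
  have hφ : ∀ w ∈ insert v S, φ w ∈ S := by
    intro w hw
    by_cases e : w = v
    · simpa [φ, e] using hp
    · simpa [φ, e] using hw
  have hsub : ∀ a ∈ S, ∀ w ∈ insert v S,
      (Below (Function.update par v p) a w ↔ Below par a (φ w)) := by
    intro a ha w hw
    by_cases e : w = v
    · subst e
      have : φ w = p := by simp [φ]
      rw [this]
      constructor
      · rintro ⟨k, hk⟩
        cases k with
        | zero => exact absurd hk.symm (hne a ha)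
        | succ k =>
          rw [Function.iterate_succ_apply, Function.update_self, (hiter k p hp).1] at hk
          exact ⟨k, hk⟩
      · rintro ⟨k, hk⟩
        refine ⟨k + 1, ?_⟩
        rw [Function.iterate_succ_apply, Function.update_self, (hiter k p hp).1, hk]
    · have hw' : w ∈ S := by simpa [e] using hw
      have : φ w = w := by simp [φ, e]
      rw [this]
      exact exists_congr fun k => by rw [(hiter k w hw').1]
  set ρ' := Function.update (fun w => if ρ p ≤ ρ w then ρ w + 1 else ρ w) v (ρ p) with hρ'
  have hρv : ρ' v = ρ p := by simp [hρ']
  have hρS : ∀ u ∈ S, ρ' u = if ρ p ≤ ρ u then ρ u + 1 else ρ u := fun u hu => by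
    simp [hρ', hne u hu]
  have hmono : ∀ u ∈ insert v S, ∀ w ∈ insert v S, ρ' u ≤ ρ' w → ρ (φ u) ≤ ρ (φ w) := by
    intro u hu w hw
    rcases Finset.mem_insert.1 hu with rfl | hu' <;> rcases Finset.mem_insert.1 hw with rfl | hw'
    · simp
    · simp only [φ, if_true, hne w hw', if_false, hρv, hρS w hw']
      split_ifs <;> omega
    · simp only [φ, if_true, hne u hu', if_false, hρv, hρS u hu']
      split_ifs <;> omega
    · simp only [φ, hne u hu', hne w hw', if_false, hρS u hu', hρS w hw']
      split_ifs <;> omega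
  have hinj : ∀ u ∈ insert v S, ∀ w ∈ insert v S, ρ' u = ρ' w → u = w := by
    intro u hu w hw e
    rcases Finset.mem_insert.1 hu with rfl | hu' <;> rcases Finset.mem_insert.1 hw with rfl | hw'
    · rfl
    · rw [hρv, hρS w hw'] at e
      split_ifs at e <;> omega
    · rw [hρv, hρS u hu'] at e
      split_ifs at e <;> omega
    · refine h.inj u hu' w hw' ?_
      rw [hρS u hu', hρS w hw'] at e
      split_ifs at e <;> omega
  refine ⟨?_, ?_, ?_, ?_, ?_, ?_, ?_, ?_, hinj, ?_⟩
  · simp [h.root_mem]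
  · rw [hpar r h.root_mem, h.par_root]
  · intro u hu
    rcases Finset.mem_insert.1 hu with rfl | hu'
    · simp [hp]
    · rw [hpar u hu']
      exact Finset.mem_insert_of_mem (h.par_mem u hu')
  · intro u hu hur
    rcases Finset.mem_insert.1 hu with rfl | hu'
    · simpa using hadj
    · rw [hpar u hu']
      exact h.adj u hu' hur
  · intro u hu hur
    rcases Finset.mem_insert.1 hu with rfl | hu'
    · simp [hne p hp]
    · rw [hpar u hu', Function.update_of_ne (hne u hu'),
        Function.update_of_ne (hne _ (h.par_mem u hu'))]
      exact h.depth u hu' hur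
  · intro u hu hur
    rcases Finset.mem_insert.1 hu with rfl | hu'
    · rw [Function.update_self, hρv, hρS p hp]
      simp
    · rw [hpar u hu', hρS u hu', hρS _ (h.par_mem u hu')]
      have := h.rank u hu' hur
      split_ifs <;> omega
  · intro u hu
    rw [hcard]
    rcases Finset.mem_insert.1 hu with rfl | hu'
    · have := h.depth_lt p hp
      simpa using this
    · rw [Function.update_of_ne (hne u hu')]
      have := h.depth_lt u hu'
      omega
  · intro u hu
    rw [hcard]
    rcases Finset.mem_insert.1 hu with rfl | hu'
    · have := h.rank_lt p hp
      omega
    · rw [hρS u hu']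
      have := h.rank_lt u hu'
      split_ifs <;> omega
  · intro a ha b hb m hm c hc hab hac hbm hmc
    rcases Finset.mem_insert.1 ha with rfl | ha'
    · -- The subtree of the new leaf is a singleton.
      have key : ∀ w ∈ insert a S, Below (Function.update par a p) a w → w = a := by
        rintro w hw ⟨k, hk⟩
        rcases Finset.mem_insert.1 hw with rfl | hw'
        · rfl
        · have := hiter k w hw'
          rw [hk] at this
          exact absurd (this.1 ▸ this.2) hv
      have hb' := key b hb hab
      have hc' := key c hc hac
      subst hb'
      subst hc'
      rw [hinj m hm _ hb (le_antisymm hmc hbm)]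
      exact Below.refl _ _
    · rw [hsub a ha' _ hm]
      exact h.convex a ha' _ (hφ b hb) _ (hφ m hm) _ (hφ c hc) ((hsub a ha' b hb).1 hab)
        ((hsub a ha' c hc).1 hac) (hmono b hb m hm hbm) (hmono m hm c hc hmc)

lemma exists_ptree {V : Type*} [Fintype V] (G : SimpleGraph V) (hG : G.Connected) :
    ∃ r par d ρ, PTree G Finset.univ r par d ρ := by
  classical
  obtain ⟨r⟩ := hG.nonempty
  have key : ∀ n, n + 1 ≤ Fintype.card V →
      ∃ S : Finset V, S.card = n + 1 ∧ ∃ par d ρ, PTree G S r par d ρ := by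
    intro n
    induction n with
    | zero =>
      intro _
      refine ⟨{r}, by simp, id, fun _ => 0, fun _ => 0, ?_⟩
      constructor <;> simp
    | succ n ih =>
      intro hn
      obtain ⟨S, hS, par, d, ρ, h⟩ := ih (by omega)
      obtain ⟨w, hw⟩ : ∃ w, w ∉ S := by
        by_contra! hall
        have : S = Finset.univ := Finset.eq_univ_of_forall hall
        rw [this, Finset.card_univ] at hS
        omega
      obtain ⟨q⟩ := hG.preconnected r w
      obtain ⟨e, -, he1, he2⟩ := q.exists_boundary_dart (S : Set V) h.root_mem hw
      exact ⟨insert e.snd S, by rw [Finset.card_insert_of_notMem he2, hS], _, _, _,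
        h.insert_leaf he1 he2 e.adj.symm⟩
  have hpos : 0 < Fintype.card V := Fintype.card_pos_iff.2 ⟨r⟩
  obtain ⟨S, hS, par, d, ρ, h⟩ := key (Fintype.card V - 1) (by omega)
  have : S = Finset.univ := Finset.eq_univ_of_card S (by omega)
  exact ⟨r, par, d, ρ, this ▸ h⟩

/-! ### Timed swaps along tree paths -/

lemma below_iterate {V : Type*} {par : V → V} (x : V) {s k : ℕ} (h : s ≤ k) :
    Below par (par^[k] x) (par^[s] x) :=
  ⟨k - s, by rw [← Function.iterate_add_apply, Nat.sub_add_cancel h]⟩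

lemma up_prod {V : Type*} [DecidableEq V] {par : V → V} (t : ℕ → ℕ) (x : V) (k : ℕ) :
    ((((List.range k).map fun s => (t s, par^[s] x)).map
      fun e : ℕ × V => Equiv.swap e.2 (par e.2)).prod) (par^[k] x) = x := by
  induction k with
  | zero => simp
  | succ k ih =>
    rw [List.range_succ, List.map_append, List.map_append, List.prod_append]
    simp only [List.map_cons, List.map_nil, List.prod_singleton, Equiv.Perm.mul_apply]
    rw [Function.iterate_succ_apply', Equiv.swap_apply_right]
    exact ih

lemma down_prod {V : Type*} [DecidableEq V] {par : V → V} (t : ℕ → ℕ) (v : V) (l : ℕ) :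
    (((((List.range l).map fun s => (t s, par^[s] v)).reverse).map
      fun e : ℕ × V => Equiv.swap e.2 (par e.2)).prod) v = par^[l] v := by
  induction l with
  | zero => simp
  | succ l ih =>
    rw [List.range_succ, List.map_append, List.reverse_append]
    simp only [List.map_cons, List.map_nil, List.reverse_cons, List.reverse_nil, List.nil_append,
      List.map_append, List.prod_append, List.prod_singleton, Equiv.Perm.mul_apply]
    rw [ih, Equiv.swap_apply_left, Function.iterate_succ_apply']

section Routing

variable {V : Type*} [Fintype V] {G : SimpleGraph V} {r : V} {par : V → V} {d ρ : V → ℕ}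

lemma PTree.below_root (h : PTree G Finset.univ r par d ρ) (u : V) : Below par r u := by
  induction hn : d u generalizing u with
  | zero =>
    by_cases hu : u = r
    · exact ⟨0, hu⟩
    · have := h.depth u (Finset.mem_univ _) hu
      omega
  | succ n ih =>
    by_cases hu : u = r
    · exact ⟨0, hu⟩
    · have := h.depth u (Finset.mem_univ _) hu
      obtain ⟨k, hk⟩ := ih (par u) (by omega)
      exact ⟨k + 1, hk⟩

lemma PTree.depth_iterate (h : PTree G Finset.univ r par d ρ) {x : V} {k : ℕ}
    (hk : ∀ s < k, par^[s] x ≠ r) : d (par^[k] x) + k = d x := by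
  induction k with
  | zero => rfl
  | succ k ih =>
    have h1 := ih (fun s hs => hk s (by omega))
    have h2 := h.depth _ (Finset.mem_univ _) (hk k (by omega))
    rw [Function.iterate_succ_apply']
    omega

lemma PTree.rank_le (h : PTree G Finset.univ r par d ρ) {a b : V} (hab : Below par a b) :
    ρ b ≤ ρ a := by
  obtain ⟨k, rfl⟩ := hab
  induction k with
  | zero => rfl
  | succ k ih =>
    rw [Function.iterate_succ_apply']
    by_cases hr : par^[k] b = r
    · rw [hr] at ih ⊢
      rwa [h.par_root]
    · exact ih.trans (h.rank _ (Finset.mem_univ _) hr).le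

/-- `Step r par d ρ i x v k l`: step `i` moves a token from `x` to the vertex `v` of rank `i` by
going up `k` edges to the lowest common ancestor `par^[k] x = par^[l] v` and down `l` edges. -/
structure Step (r : V) (par : V → V) (ρ : V → ℕ) (i : ℕ) (x v : V) (k l : ℕ) : Prop where
  rank_v : ρ v = i
  rank_x : i ≤ ρ x
  top : par^[l] v = par^[k] x
  not_below : ∀ s < k, ¬ Below par (par^[s] x) v
  down_ne : ∀ s < l, par^[s] v ≠ r

/-- `Entry r par d ρ D i e`: the pair `e = (t, u)` is a swap of step `i` on the edge from `u` to its
parent, at time `t`.  The first alternative is a swap on the way up (with the subtraction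
of `d u` avoided), the second one on the way down; `D` is a bound for the depths. -/
def Entry (r : V) (par : V → V) (d ρ : V → ℕ) (D i : ℕ) (e : ℕ × V) : Prop :=
  ∃ x v k l, Step r par ρ i x v k l ∧
    ((∃ s < k, e.2 = par^[s] x ∧ e.1 + d e.2 = 3 * i + D + 2 * d (par^[k] x)) ∨
     (∃ s < l, e.2 = par^[s] v ∧ e.1 = 3 * i + D + d e.2))

lemma Step.up_ne (h : PTree G Finset.univ r par d ρ) {i : ℕ} {x v : V} {k l : ℕ}
    (hs : Step r par ρ i x v k l) : ∀ s < k, par^[s] x ≠ r := fun s hsk e =>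
  hs.not_below s hsk (e ▸ h.below_root v)

/-- An ancestor of the source of step `j` deeper than the top of its path does not have
the target of an earlier step in its subtree. -/
lemma Step.key (h : PTree G Finset.univ r par d ρ) {i j : ℕ} (hij : i < j) {y x v : V}
    {k l : ℕ} (hy : ρ y = i) (hs : Step r par ρ j x v k l) {s : ℕ} (hsk : s < k)
    (hsub : Below par (par^[s] x) y) : False := by
  refine hs.not_below s hsk (h.convex _ (Finset.mem_univ _) y (Finset.mem_univ _) _
    (Finset.mem_univ _) x (Finset.mem_univ _) hsub ⟨s, rfl⟩ ?_ ?_)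
  · rw [hs.rank_v]; omega
  · rw [hs.rank_v]; exact hs.rank_x

/-- Swaps of different steps that share a vertex have increasing times. -/
lemma entry_lt_or_disjoint [DecidableEq V] (h : PTree G Finset.univ r par d ρ) {D i j : ℕ}
    (hij : i < j) {e f : ℕ × V} (he : Entry r par d ρ D i e) (hf : Entry r par d ρ D j f) :
    e.1 < f.1 ∨ (Equiv.swap e.2 (par e.2)).Disjoint (Equiv.swap f.2 (par f.2)) := by
  by_cases hw : ∃ w, (w = e.2 ∨ w = par e.2) ∧ (w = f.2 ∨ w = par f.2)
  swap
  · right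
    push Not at hw
    intro w
    by_cases h1 : w = e.2 ∨ w = par e.2
    · exact Or.inr (Equiv.swap_apply_of_ne_of_ne (hw w h1).1 (hw w h1).2)
    · push Not at h1
      exact Or.inl (Equiv.swap_apply_of_ne_of_ne h1.1 h1.2)
  left
  obtain ⟨w, hwe, hwf⟩ := hw
  obtain ⟨x, v, k, l, hs, hcase⟩ := he
  obtain ⟨x', v', k', l', hs', hcase'⟩ := hf
  have hdep : ∀ u, u ≠ r → (w = u ∨ w = par u) → d u = d w ∨ d u = d w + 1 := by
    rintro u hu (rfl | rfl)
    · exact Or.inl rfl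
    · exact Or.inr (h.depth u (Finset.mem_univ _) hu)
  have hsubw : ∀ u b, Below par u b → (w = u ∨ w = par u) → Below par w b := by
    rintro u b hu (rfl | rfl)
    · exact hu
    · exact hu.step
  rcases hcase with ⟨s, hsk, hu, ht⟩ | ⟨s, hsl, hu, ht⟩
  · -- The swap of step `i` is on the way up, so `w` lies below the top of step `i`.
    have hur : e.2 ≠ r := hu ▸ hs.up_ne h s hsk
    have hew := hdep _ hur hwe
    have hwtop : Below par (par^[k] x) w := by
      rcases hwe with rfl | rfl
      · rw [hu]; exact below_iterate x hsk.le
      · rw [hu, ← Function.iterate_succ_apply' par]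
        exact below_iterate x hsk
    have htopv : Below par (par^[k] x) v := ⟨l, hs.top⟩
    have hd1 := h.depth_iterate (k := k) (hs.up_ne h)
    have hd2 := h.depth_iterate (k := s) (fun q hq => hs.up_ne h q (by omega))
    rw [← hu] at hd2
    rcases hcase' with ⟨s', hsk', hu', ht'⟩ | ⟨s', hsl', hu', ht'⟩
    · have hur' : f.2 ≠ r := hu' ▸ hs'.up_ne h s' hsk'
      have hfw := hdep _ hur' hwf
      have htops : d (par^[k] x) ≤ d (par^[k'] x') := by
        by_contra! hlt
        have hxw : Below par w x' := hsubw _ x' ⟨s', hu'.symm⟩ hwf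
        obtain ⟨q, hq⟩ := hwtop.trans hxw
        -- The top of step `i` is an ancestor of `x'`, strictly deeper than the top of step `j`.
        have hqk : q < k' := by
          by_contra! hkq
          obtain ⟨z, rfl⟩ := Nat.exists_eq_add_of_le' hkq
          rw [Function.iterate_add_apply] at hq
          rw [← hq] at hlt
          clear hq
          have : ∀ z u, d (par^[z] u) ≤ d u := by
            intro z
            induction z with
            | zero => intro u; rfl
            | succ z ih =>
              intro u
              rw [Function.iterate_succ_apply]
              refine (ih _).trans ?_
              by_cases hr : u = r
              · rw [hr, h.par_root]
              · have := h.depth u (Finset.mem_univ _) hr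
                omega
          have := this z (par^[k'] x')
          omega
        exact hs'.key h hij hs.rank_v hqk (hq ▸ htopv)
      omega
    · have hur' : f.2 ≠ r := hu' ▸ hs'.down_ne s' hsl'
      have hfw := hdep _ hur' hwf
      have hwd : d (par^[k] x) ≤ d w := by omega
      omega
  · have hur : e.2 ≠ r := hu ▸ hs.down_ne s hsl
    have hew := hdep _ hur hwe
    have hwv : Below par w v := hsubw _ v ⟨s, hu.symm⟩ hwe
    rcases hcase' with ⟨s', hsk', hu', ht'⟩ | ⟨s', hsl', hu', ht'⟩
    · -- Up after down: the only common vertex can be the top of step `j`.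
      have hur' : f.2 ≠ r := hu' ▸ hs'.up_ne h s' hsk'
      have hfd := h.depth _ (Finset.mem_univ _) hur'
      rcases hwf with hwf | hwf
      · exact (hs'.key h hij hs.rank_v hsk' (by rw [← hu', ← hwf]; exact hwv)).elim
      · rw [hu', ← Function.iterate_succ_apply' par] at hwf
        by_cases hlast : s' + 1 < k'
        · exact (hs'.key h hij hs.rank_v hlast (by rw [← hwf]; exact hwv)).elim
        · have : s' + 1 = k' := by omega
          subst this
          rw [hu', ← Function.iterate_succ_apply' par, ← hwf, ← hu'] at hfd
          rw [← hwf] at ht'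
          omega
    · have hur' : f.2 ≠ r := hu' ▸ hs'.down_ne s' hsl'
      have hfw := hdep _ hur' hwf
      omega

lemma exists_step (h : PTree G Finset.univ r par d ρ) {i : ℕ} {x v : V} (hv : ρ v = i)
    (hx : i ≤ ρ x) : ∃ k l, Step r par ρ i x v k l := by
  classical
  have hk : ∃ k, Below par (par^[k] x) v := by
    obtain ⟨k, hk⟩ := h.below_root x
    exact ⟨k, hk ▸ h.below_root v⟩
  have hl : ∃ l, par^[l] v = par^[Nat.find hk] x := Nat.find_spec hk
  refine ⟨Nat.find hk, Nat.find hl, hv, hx, Nat.find_spec hl, fun s hs => Nat.find_min hk hs,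
    fun s hs e => Nat.find_min hl hs ?_⟩
  -- If the path up from `v` reaches the root early, the top is the root itself.
  have h1 := Nat.find_spec hl
  obtain ⟨z, hz⟩ := Nat.exists_eq_add_of_le' hs.le
  rw [← h1, hz, Function.iterate_add_apply, e, Function.iterate_fixed h.par_root]

/-- The word of a single step: it takes `v` to `x`, and its times increase strictly. -/
lemma exists_step_word [DecidableEq V] (h : PTree G Finset.univ r par d ρ) {D i : ℕ}
    (hD : ∀ u, d u ≤ D) {x v : V} (hv : ρ v = i) (hx : i ≤ ρ x) :
    ∃ L : List (ℕ × V), (∀ e ∈ L, Entry r par d ρ D i e ∧ i ≤ ρ e.2) ∧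
      L.Pairwise (fun a b => a.1 < b.1) ∧
      (L.map fun e => Equiv.swap e.2 (par e.2)).prod v = x := by
  obtain ⟨k, l, hs⟩ := exists_step h hv hx
  have hup : ∀ s ≤ k, d (par^[s] x) + s = d x := fun s hsk =>
    h.depth_iterate fun q hq => hs.up_ne h q (by omega)
  have hdown : ∀ s ≤ l, d (par^[s] v) + s = d v := fun s hsl =>
    h.depth_iterate fun q hq => hs.down_ne q (by omega)
  have htop := hs.top
  refine ⟨((List.range k).map fun s =>
      (3 * i + D + 2 * d (par^[k] x) - d (par^[s] x), par^[s] x)) ++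
    ((List.range l).map fun s => (3 * i + D + d (par^[s] v), par^[s] v)).reverse, ?_, ?_, ?_⟩
  · intro e he
    rcases List.mem_append.1 he with he | he
    · obtain ⟨s, hsk, rfl⟩ := List.mem_map.1 he
      rw [List.mem_range] at hsk
      refine ⟨⟨x, v, k, l, hs, Or.inl ⟨s, hsk, rfl, ?_⟩⟩, hx.trans (h.rank_le ⟨s, rfl⟩)⟩
      have := hD (par^[s] x)
      simp only
      omega
    · rw [List.mem_reverse] at he
      obtain ⟨s, hsl, rfl⟩ := List.mem_map.1 he
      rw [List.mem_range] at hsl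
      exact ⟨⟨x, v, k, l, hs, Or.inr ⟨s, hsl, rfl, rfl⟩⟩, hv.ge.trans (h.rank_le ⟨s, rfl⟩)⟩
  · rw [List.pairwise_append]
    refine ⟨?_, ?_, ?_⟩
    · rw [List.pairwise_map]
      refine List.pairwise_lt_range.imp_of_mem fun {a b} ha hb hab => ?_
      rw [List.mem_range] at ha hb
      have h1 := hup a ha.le
      have h2 := hup b hb.le
      have := hD (par^[a] x)
      simp only
      omega
    · rw [List.pairwise_reverse, List.pairwise_map]
      refine List.pairwise_lt_range.imp_of_mem fun {a b} ha hb hab => ?_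
      rw [List.mem_range] at ha hb
      have h1 := hdown a ha.le
      have h2 := hdown b hb.le
      simp only
      omega
    · intro a ha b hb
      obtain ⟨s, hsk, rfl⟩ := List.mem_map.1 ha
      rw [List.mem_reverse] at hb
      obtain ⟨q, hql, rfl⟩ := List.mem_map.1 hb
      rw [List.mem_range] at hsk hql
      have h1 := hup s hsk.le
      have h2 := hup k le_rfl
      have h3 := hdown q hql.le
      have h4 := hdown l le_rfl
      rw [htop] at h4
      simp only
      omega
  · rw [List.map_append, List.prod_append, Equiv.Perm.mul_apply, down_prod, htop]
    exact up_prod _ x k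

lemma prod_apply_of_rank_lt [DecidableEq V] (h : PTree G Finset.univ r par d ρ) {i : ℕ}
    (L : List (ℕ × V)) (hL : ∀ e ∈ L, i ≤ ρ e.2) {w : V} (hw : ρ w < i) :
    (L.map fun e => Equiv.swap e.2 (par e.2)).prod w = w := by
  induction L with
  | nil => rfl
  | cons e L ih =>
    rw [List.map_cons, List.prod_cons, Equiv.Perm.mul_apply, ih fun f hf => hL f (by simp [hf])]
    have h1 := hL e (by simp)
    have h2 : ρ e.2 ≤ ρ (par e.2) := h.rank_le (Below.refl par e.2).step
    exact Equiv.swap_apply_of_ne_of_ne (fun h' => by subst h'; omega)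
      (fun h' => by rw [h'] at hw; omega)

/-- Once the vertices of rank below `i` are settled, the remaining permutation is a word in
the swaps of the steps `j ≥ i`. -/
lemma exists_word [DecidableEq V] (h : PTree G Finset.univ r par d ρ) {D : ℕ}
    (hD : ∀ u, d u ≤ D) (n : ℕ) : ∀ i, i + n = Fintype.card V → ∀ π : Equiv.Perm V,
    (∀ w, ρ w < i → π w = w) →
    ∃ L : List (ℕ × V), (∀ e ∈ L, ∃ j ≥ i, Entry r par d ρ D j e) ∧
      L.Pairwise (fun a b => a.1 < b.1 ∨
        (Equiv.swap a.2 (par a.2)).Disjoint (Equiv.swap b.2 (par b.2))) ∧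
      (L.map fun e => Equiv.swap e.2 (par e.2)).prod = π := by
  induction n with
  | zero =>
    intro i hi π hπ
    refine ⟨[], by simp, by simp, ?_⟩
    ext w
    have := h.rank_lt w (Finset.mem_univ _)
    rw [Finset.card_univ] at this
    simp [hπ w (by omega)]
  | succ n ih =>
    intro i hi π hπ
    by_cases hv : ∃ v, ρ v = i
    · obtain ⟨v, hv⟩ := hv
      have hx : i ≤ ρ (π v) := by
        by_contra! hlt
        have := π.injective (hπ _ hlt)
        rw [this] at hlt
        omega
      obtain ⟨L, hL, hLp, hLv⟩ := exists_step_word h hD hv hx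
      set c := (L.map fun e => Equiv.swap e.2 (par e.2)).prod with hc
      obtain ⟨M, hM, hMp, hMπ⟩ := ih (i + 1) (by omega) (c⁻¹ * π) (by
        intro w hw
        rw [Equiv.Perm.mul_apply, Equiv.Perm.inv_eq_iff_eq]
        rcases Nat.lt_succ_iff_lt_or_eq.1 hw with hlt | heq
        · rw [hπ w hlt, hc, prod_apply_of_rank_lt h L (fun e he => (hL e he).2) hlt]
        · rw [h.inj w (Finset.mem_univ _) v (Finset.mem_univ _) (heq.trans hv.symm), hLv])
      refine ⟨L ++ M, ?_, ?_, ?_⟩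
      · intro e he
        rcases List.mem_append.1 he with he | he
        · exact ⟨i, le_rfl, (hL e he).1⟩
        · obtain ⟨j, hj, hje⟩ := hM e he
          exact ⟨j, by omega, hje⟩
      · rw [List.pairwise_append]
        refine ⟨hLp.imp Or.inl, hMp, fun a ha b hb => ?_⟩
        obtain ⟨j, hj, hjb⟩ := hM b hb
        exact entry_lt_or_disjoint h hj (hL a ha).1 hjb
      · rw [List.map_append, List.prod_append, hMπ, ← hc, mul_inv_cancel_left]
    · obtain ⟨M, hM, hMp, hMπ⟩ := ih (i + 1) (by omega) π (by
        intro w hw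
        rcases Nat.lt_succ_iff_lt_or_eq.1 hw with hlt | heq
        · exact hπ w hlt
        · exact absurd ⟨w, heq⟩ hv)
      refine ⟨M, fun e he => ?_, hMp, hMπ⟩
      obtain ⟨j, hj, hje⟩ := hM e he
      exact ⟨j, by omega, hje⟩

lemma Entry.isSwapRound [DecidableEq V] (h : PTree G Finset.univ r par d ρ) {D i : ℕ}
    {e : ℕ × V} (he : Entry r par d ρ D i e) : IsSwapRound G (Equiv.swap e.2 (par e.2)) := by
  have hne : e.2 ≠ r := by
    obtain ⟨x, v, k, l, hs, ⟨s, hsk, hu, -⟩ | ⟨s, hsl, hu, -⟩⟩ := he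
    · exact hu ▸ hs.up_ne h s hsk
    · exact hu ▸ hs.down_ne s hsl
  have hadj := h.adj _ (Finset.mem_univ _) hne
  refine ⟨Equiv.swap_mul_self _ _, fun w hw => ?_⟩
  rcases Equiv.swap_apply_ne_self_iff.1 hw with ⟨-, rfl | rfl⟩
  · rwa [Equiv.swap_apply_left]
  · rw [Equiv.swap_apply_right]
    exact hadj.symm

lemma Entry.time_lt (h : PTree G Finset.univ r par d ρ) {i : ℕ} {e : ℕ × V}
    (he : Entry r par d ρ (Fintype.card V) i e) : e.1 < 6 * Fintype.card V := by
  have hd : ∀ u, d u < Fintype.card V := fun u => by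
    simpa using h.depth_lt u (Finset.mem_univ _)
  obtain ⟨x, v, k, l, hs, hc⟩ := he
  have h1 := h.rank_lt v (Finset.mem_univ _)
  rw [Finset.card_univ, hs.rank_v] at h1
  have h2 := hd e.2
  have h3 := hd (par^[k] x)
  rcases hc with ⟨s, -, -, ht⟩ | ⟨s, -, -, ht⟩ <;> omega

end Routing

/-- There is a universal constant `C` such that on any finite connected simple graph on
`N` vertices, every permutation can be routed with swaps in at most `C·N` rounds. -/
theorem swap_routing_time_le_linear :
    ∃ C : ℝ, 0 < C ∧ ∀ (V : Type) (_ : Fintype V) (G : SimpleGraph V), G.Connected →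
      ∀ π : Equiv.Perm V, (rtS G π : ℝ) ≤ C * (Fintype.card V : ℝ) := by
  classical
  refine ⟨6, by norm_num, fun V _ G hG π => ?_⟩
  obtain ⟨r, par, d, ρ, h⟩ := exists_ptree G hG
  have hd : ∀ u, d u ≤ Fintype.card V := fun u => by
    simpa using (h.depth_lt u (Finset.mem_univ _)).le
  obtain ⟨L, hL, hLp, hLπ⟩ := exists_word h hd (Fintype.card V) 0 (by omega) π (by simp)
  obtain ⟨M, hM, hMr, hMp⟩ := schedule G (fun e : ℕ × V => Equiv.swap e.2 (par e.2)) Prod.fst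
    (6 * Fintype.card V) L
    (fun e he => by
      obtain ⟨j, -, hj⟩ := hL e he
      exact hj.isSwapRound h)
    hLp
    (fun e he => by
      obtain ⟨j, -, hj⟩ := hL e he
      exact hj.time_lt h)
  have : rtS G π ≤ 6 * Fintype.card V := Nat.sInf_le ⟨M, hM, hMr, hMp.trans hLπ⟩
  exact_mod_cast this
end

section
/- There exists a universal constant C such that the following holds. Let G be a finite connected simple graph on N vertices, where each vertex carries one data slot and one ancilla slot (2N slots in total holding 2N distinct tokens). In one round one may apply any set of pairwise disjoint moves, each move being either a swap of the data tokens of two adjacent vertices or a swap of a vertex's data token with its own ancilla token. Then for every k and every permutation π of V(G) with at most k non-fixed points, there is a protocol of at most C·(diam(G) + k) rounds after which, for every vertex v, the data slot of π(v) holds the token that initially occupied the data slot of v. -/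
/-- Slots in the swap-with-ancillas model: each vertex `v` has a data slot `(v, false)`
and an ancilla slot `(v, true)`. -/
abbrev Slot (V : Type*) := V × Bool

/-- A round in the swap-with-ancillas model: an involution of the slots in which every
non-fixed slot is either a data slot swapped with the data slot of an adjacent vertex,
or a slot swapped with the other slot of the same vertex. -/
def IsAncillaRound {V : Type*} (G : SimpleGraph V) (τ : Equiv.Perm (Slot V)) : Prop :=
  τ * τ = 1 ∧ ∀ s : Slot V, τ s ≠ s →
    ((τ s).1 = s.1 ∨ (s.2 = false ∧ (τ s).2 = false ∧ G.Adj s.1 (τ s).1))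

/-!
The proof streams the non-fixed tokens through a root.

Write `π` as a product of swaps of consecutive entries of a list `x 0, …, x n` of distinct
vertices, some of the swaps being left out (`exists_chain`; each cycle of `π` is a block of
consecutive entries). Park every data token in its ancilla slot, and let the token of `x i` walk up
a shortest-path tree towards the root `r` with its departure timed so that it reaches `r` at time
`D + 2 * i`. At any time the tokens under way have distinct depths of the same parity, so all
their steps can be carried out in a single round without disturbing one another, and tokens still
waiting in their ancilla slots are not touched either (`exists_step`). At time `D + 2 * i + 1` the
token of `x i` is at `r` and the token of `x (i + 1)` is in a slot that can be swapped with it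
(`exists_meet`).

Let `P` be the composition of the streaming rounds. Inserting the meeting swaps at these times
turns `P` into `P * U`, where `U` is the product of the corresponding swaps of *initial* slots,
because each inserted swap is conjugated by the rounds preceding it. Running the streaming rounds
backwards then leaves `U`, and in particular returns all the displaced tokens to their places.
-/

/-! ### Permutations as chains of swaps -/

open Equiv in
/-- Every permutation is a product of swaps of consecutive entries of an injective sequence, some
swaps being omitted. The partial products are `c i`; the last entry `a` can be prescribed, which is
what lets the induction append one entry at a time. -/
lemma exists_chain {V : Type*} [Fintype V] [DecidableEq V] :
    ∀ (m : ℕ) (π : Perm V) (a : V), (insert a π.support).card ≤ m →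
      ∃ (n : ℕ) (x : ℕ → V) (c : ℕ → Perm V), c 0 = 1 ∧
        (∀ i < n, c (i + 1) = c i ∨ c (i + 1) = swap (x i) (x (i + 1)) * c i) ∧ c n = π ∧
        (∀ i ≤ n, ∀ j ≤ n, x i = x j → i = j) ∧ (∀ i ≤ n, x i ∈ insert a π.support) ∧
        x n = a := by
  intro m
  induction m with
  | zero => intro π a h; simp at h
  | succ m ih =>
    intro π a h
    have key : ∀ (π' : Perm V) (y : V), insert y π'.support ⊆ (insert a π.support).erase a →
        (π = π' ∨ π = swap y a * π') →
        ∃ (n : ℕ) (x : ℕ → V) (c : ℕ → Perm V), c 0 = 1 ∧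
        (∀ i < n, c (i + 1) = c i ∨ c (i + 1) = swap (x i) (x (i + 1)) * c i) ∧ c n = π ∧
        (∀ i ≤ n, ∀ j ≤ n, x i = x j → i = j) ∧ (∀ i ≤ n, x i ∈ insert a π.support) ∧
        x n = a := by
      intro π' y hsub hπ
      have hcard : (insert y π'.support).card ≤ m := by
        have h1 := Finset.card_le_card hsub
        rw [Finset.card_erase_of_mem (Finset.mem_insert_self _ _)] at h1
        omega
      obtain ⟨n, x, c, h0, hs, hn, hinj, hmem, hlast⟩ := ih π' y hcard
      have hne : ∀ i ≤ n, x i ≠ a := fun i hi => (Finset.mem_erase.1 (hsub (hmem i hi))).1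
      refine ⟨n + 1, fun i => if i ≤ n then x i else a, fun i => if i ≤ n then c i else π,
        by simpa using h0, ?_, by simp, ?_, ?_, by simp⟩
      · intro i hi
        rcases Nat.lt_or_ge i n with hin | hin
        · simpa [hin.le, Nat.succ_le_of_lt hin] using hs i hin
        · obtain rfl : i = n := by omega
          simpa [hn, hlast] using hπ
      · intro i hi j hj hij
        grind
      · intro i hi
        by_cases hin : i ≤ n
        · simpa [hin] using Finset.mem_of_mem_erase (hsub (hmem i hin))
        · simp [hin]
    -- If `a` is fixed, it is appended without a swap. Otherwise `swap (π a) a * π` fixes `a`, and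
    -- a chain for it ending in `π a` is extended by `a`.
    by_cases ha : π a = a
    · by_cases h1 : π = 1
      · exact ⟨0, fun _ => a, fun _ => 1, rfl, by simp, h1.symm, by grind, by simp, rfl⟩
      · obtain ⟨y, hy⟩ : ∃ y, π y ≠ y := by
          by_contra! hall
          exact h1 (Equiv.ext hall)
        refine key π y ?_ (Or.inl rfl)
        intro z hz
        simp only [Finset.mem_insert, Perm.mem_support, Finset.mem_erase] at hz ⊢
        grind
    · refine key (swap (π a) a * π) (π a) ?_ (Or.inr (by simp [← mul_assoc]))
      intro z hz
      simp only [Finset.mem_insert, Perm.mem_support, Finset.mem_erase, Perm.mul_apply] at hz ⊢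
      rcases hz with rfl | hz
      · exact ⟨ha, Or.inr fun hh => ha (π.injective hh)⟩
      · refine ⟨?_, Or.inr ?_⟩
        · rintro rfl
          simp at hz
        · intro hh
          rw [hh] at hz
          have hza : z ≠ a := by rintro rfl; exact ha hh
          have hzp : z ≠ π a := by
            intro e; exact hza (π.injective (hh.trans e))
          exact hz (swap_apply_of_ne_of_ne hzp hza)

/-! ### Rounds and protocols -/

/-- Pairwise disjoint swaps `f i ↔ g i` can be performed simultaneously. -/
lemma exists_simultaneous_swap {S : Type*} (I : Set ℕ) (f g : ℕ → S)
    (hf : ∀ i ∈ I, ∀ j ∈ I, f i = f j → i = j) (hg : ∀ i ∈ I, ∀ j ∈ I, g i = g j → i = j)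
    (hfg : ∀ i ∈ I, ∀ j ∈ I, f i ≠ g j) :
    ∃ τ : Equiv.Perm S, τ * τ = 1 ∧ (∀ i ∈ I, τ (f i) = g i) ∧ (∀ i ∈ I, τ (g i) = f i) ∧
      ∀ s, (∀ i ∈ I, s ≠ f i ∧ s ≠ g i) → τ s = s := by
  classical
  let φ : S → S := fun s => if h : ∃ i ∈ I, f i = s then g h.choose
    else if h : ∃ i ∈ I, g i = s then f h.choose else s
  have h1 : ∀ i ∈ I, φ (f i) = g i := by
    intro i hi
    have h : ∃ j ∈ I, f j = f i := ⟨i, hi, rfl⟩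
    simp only [φ, dif_pos h]
    rw [hf _ h.choose_spec.1 _ hi h.choose_spec.2]
  have h2 : ∀ i ∈ I, φ (g i) = f i := by
    intro i hi
    have h' : ¬ ∃ j ∈ I, f j = g i := by
      rintro ⟨j, hj, e⟩; exact hfg j hj i hi e
    have h : ∃ j ∈ I, g j = g i := ⟨i, hi, rfl⟩
    simp only [φ, dif_neg h', dif_pos h]
    rw [hg _ h.choose_spec.1 _ hi h.choose_spec.2]
  have h3 : ∀ s, (∀ i ∈ I, s ≠ f i ∧ s ≠ g i) → φ s = s := by
    intro s hs
    have h' : ¬ ∃ j ∈ I, f j = s := by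
      rintro ⟨j, hj, e⟩; exact (hs j hj).1 e.symm
    have h : ¬ ∃ j ∈ I, g j = s := by
      rintro ⟨j, hj, e⟩; exact (hs j hj).2 e.symm
    simp only [φ, dif_neg h', dif_neg h]
  have hinv : Function.Involutive φ := by
    intro s
    by_cases hs : ∀ i ∈ I, s ≠ f i ∧ s ≠ g i
    · rw [h3 s hs, h3 s hs]
    · push Not at hs
      obtain ⟨i, hi, h⟩ := hs
      by_cases e : s = f i
      · rw [e, h1 i hi, h2 i hi]
      · rw [h e, h2 i hi, h1 i hi]
  exact ⟨hinv.toPerm, Equiv.ext hinv, h1, h2, h3⟩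

/-- The slots `s` and `t` may be swapped within a round. As in the definition of a round, this includes
`s = t`. -/
def CanSwap {V : Type*} (G : SimpleGraph V) (s t : Slot V) : Prop :=
  t.1 = s.1 ∨ (s.2 = false ∧ t.2 = false ∧ G.Adj s.1 t.1)

lemma CanSwap.symm {V : Type*} {G : SimpleGraph V} {s t : Slot V} (h : CanSwap G s t) :
    CanSwap G t s := by
  rcases h with h | ⟨h1, h2, h3⟩
  · exact Or.inl h.symm
  · exact Or.inr ⟨h2, h1, h3.symm⟩

lemma isAncillaRound_swap {V : Type*} [DecidableEq V] {G : SimpleGraph V} {s t : Slot V}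
    (h : CanSwap G s t) : IsAncillaRound G (Equiv.swap s t) := by
  refine ⟨Equiv.swap_mul_self s t, fun u hu => ?_⟩
  rcases (Equiv.swap_apply_ne_self_iff.1 hu).2 with rfl | rfl
  · simpa [CanSwap] using h
  · simpa [CanSwap] using h.symm

/-- The round exchanging data and ancilla at every vertex. -/
def flipAll (V : Type*) : Equiv.Perm (Slot V) := Equiv.prodCongr (Equiv.refl V) Equiv.boolNot

lemma isAncillaRound_flipAll {V : Type*} (G : SimpleGraph V) : IsAncillaRound G (flipAll V) := by
  refine ⟨?_, fun s _ => Or.inl rfl⟩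
  ext s <;> simp [flipAll]

/-- `Routable G m U`: the slot permutation `U` is a product of at most `m` rounds. -/
def Routable {V : Type*} (G : SimpleGraph V) (m : ℕ) (U : Equiv.Perm (Slot V)) : Prop :=
  ∃ L : List (Equiv.Perm (Slot V)), (∀ τ ∈ L, IsAncillaRound G τ) ∧ L.prod = U ∧ L.length ≤ m

namespace Routable

variable {V : Type*} {G : SimpleGraph V} {m m' : ℕ} {A B : Equiv.Perm (Slot V)}

lemma one : Routable G 0 (1 : Equiv.Perm (Slot V)) := ⟨[], by simp, rfl, le_rfl⟩

lemma mono (h : Routable G m A) (hm : m ≤ m') : Routable G m' A := by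
  obtain ⟨L, h1, h2, h3⟩ := h
  exact ⟨L, h1, h2, h3.trans hm⟩

lemma of_round (h : IsAncillaRound G A) : Routable G 1 A :=
  ⟨[A], by simpa using h, by simp, le_rfl⟩

lemma mul (hA : Routable G m A) (hB : Routable G m' B) : Routable G (m + m') (A * B) := by
  obtain ⟨L, h1, rfl, h3⟩ := hA
  obtain ⟨L', h1', rfl, h3'⟩ := hB
  refine ⟨L ++ L', ?_, by simp, by simp; omega⟩
  intro τ hτ
  rcases List.mem_append.1 hτ with h | h
  exacts [h1 τ h, h1' τ h]

/-- Rounds are involutions, so a protocol is undone by running it backwards. -/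
lemma inv (hA : Routable G m A) : Routable G m A⁻¹ := by
  obtain ⟨L, h1, rfl, h3⟩ := hA
  refine ⟨L.reverse, by simpa using h1, ?_, by simpa using h3⟩
  rw [List.prod_inv_reverse]
  congr 2
  symm
  calc L.map (fun x => x⁻¹) = L.map id :=
        List.map_congr_left fun τ hτ => inv_eq_of_mul_eq_one_left (h1 τ hτ).1
    _ = L := List.map_id L

end Routable

/-! ### Streaming tokens to a root -/

/-- In a connected graph there is a parent map decreasing the distance to the root `r` by one, with
`r` its own parent. -/
lemma exists_parent {V : Type*} {G : SimpleGraph V} (hG : G.Connected) (r : V) :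
    ∃ p : V → V, (∀ v, G.dist (p v) r = G.dist v r - 1) ∧
      ∀ v, G.dist v r ≠ 0 → G.Adj v (p v) := by
  have : ∀ v, ∃ u, G.dist u r = G.dist v r - 1 ∧ (G.dist v r ≠ 0 → G.Adj v u) := by
    intro v
    obtain ⟨w, hw⟩ := hG.exists_walk_length_eq_dist v r
    cases w with
    | nil => exact ⟨r, by simp, by simp⟩
    | @cons _ u _ huv w =>
      refine ⟨u, ?_, fun _ => huv⟩
      have h1 := SimpleGraph.dist_le w
      have h2 := hG.dist_triangle (u := v) (v := u) (w := r)
      have h3 := (SimpleGraph.dist_eq_one_iff_adj).2 huv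
      simp only [SimpleGraph.Walk.length_cons] at hw
      omega
  choose p hp using this
  exact ⟨p, fun v => (hp v).1, fun v => (hp v).2⟩

section Stream

variable {V : Type*} (G : SimpleGraph V) (r : V) (p : V → V) (D : ℕ) (x : ℕ → V)

/-- The slot at time `t` of the token number `i` of the stream: it waits in the ancilla slot of
`x i`, emerges into the data slot and then follows parents, so as to reach the root `r` at time
`D + 2 * i`. Since the root is its own parent, the formula gives the data slot of `r` from then
on, although the actual token stays there only until time `D + 2 * i + 1`. -/
noncomputable def streamPos (i t : ℕ) : Slot V :=
  if t + G.dist (x i) r < D + 2 * i then (x i, true)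
  else (p^[t + G.dist (x i) r - (D + 2 * i)] (x i), false)

variable {G r p D x}

lemma dist_iterate_parent (hp : ∀ v, G.dist (p v) r = G.dist v r - 1) (m : ℕ) (v : V) :
    G.dist (p^[m] v) r = G.dist v r - m := by
  induction m with
  | zero => simp
  | succ m ih => rw [Function.iterate_succ_apply', hp, ih]; omega

/-- A token is either waiting in its ancilla slot or in a data slot at depth `D + 2 * i - t`. -/
lemma streamPos_cases (hp : ∀ v, G.dist (p v) r = G.dist v r - 1) (i t : ℕ) :
    (t + G.dist (x i) r < D + 2 * i ∧ streamPos G r p D x i t = (x i, true)) ∨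
    (D + 2 * i ≤ t + G.dist (x i) r ∧ (streamPos G r p D x i t).2 = false ∧
      G.dist (streamPos G r p D x i t).1 r = D + 2 * i - t) := by
  by_cases h : t + G.dist (x i) r < D + 2 * i
  · exact Or.inl ⟨h, by simp [streamPos, h]⟩
  · refine Or.inr ⟨by omega, by simp [streamPos, h], ?_⟩
    simp only [streamPos, h, if_false]
    rw [dist_iterate_parent hp]
    omega

lemma canSwap_streamPos (hadj : ∀ v, G.dist v r ≠ 0 → G.Adj v (p v))
    (hp : ∀ v, G.dist (p v) r = G.dist v r - 1) {i t : ℕ}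
    (h1 : D + 2 * i ≤ t + 1 + G.dist (x i) r) (h2 : t + 1 ≤ D + 2 * i) :
    CanSwap G (streamPos G r p D x i t) (streamPos G r p D x i (t + 1)) := by
  by_cases h : t + G.dist (x i) r < D + 2 * i
  · left
    have e : t + 1 + G.dist (x i) r - (D + 2 * i) = 0 := by omega
    simp [streamPos, h, not_lt.2 h1, e]
  · right
    have e : t + 1 + G.dist (x i) r - (D + 2 * i) = t + G.dist (x i) r - (D + 2 * i) + 1 := by
      omega
    simp only [streamPos, h, not_lt.2 h1, e, if_false, Function.iterate_succ_apply', true_and]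
    apply hadj
    rw [dist_iterate_parent hp]
    omega

/-- One round advances all tokens of the stream that are under way and leaves alone those still
waiting. The case `t = D + 2 * i` says that a token that has just reached the root is not disturbed
for one further round. The swaps are disjoint: token `j` moves between depths `D + 2 * j - t` and
`D + 2 * j - t - 1`, or within the two slots of `x j`. -/
lemma exists_step_s4 (hG : G.Connected) (hadj : ∀ v, G.dist v r ≠ 0 → G.Adj v (p v))
    (hp : ∀ v, G.dist (p v) r = G.dist v r - 1) {n : ℕ}
    (hx : ∀ i ≤ n, ∀ j ≤ n, x i = x j → i = j) (t : ℕ) :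
    ∃ τ, IsAncillaRound G τ ∧ ∀ i ≤ n, t ≤ D + 2 * i →
      τ (streamPos G r p D x i t) = streamPos G r p D x i (t + 1) := by
  let I : Set ℕ := {i | i ≤ n ∧ D + 2 * i ≤ t + 1 + G.dist (x i) r ∧ t + 1 ≤ D + 2 * i}
  have C := fun i s => streamPos_cases (D := D) (x := x) hp i s
  obtain ⟨τ, hτ, hf, hg, hfix⟩ := exists_simultaneous_swap I
    (fun i => streamPos G r p D x i t) (fun i => streamPos G r p D x i (t + 1))
    (by
      rintro i ⟨hi, hi1, hi2⟩ j ⟨hj, hj1, hj2⟩ (e : streamPos G r p D x i t = streamPos G r p D x j t)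
      rcases C i t with ⟨a1, a2⟩ | ⟨a1, a2, a3⟩ <;> rcases C j t with ⟨b1, b2⟩ | ⟨b1, b2, b3⟩
      · rw [a2, b2] at e
        exact hx i hi j hj (congrArg Prod.fst e)
      · rw [← e, a2] at b2
        cases b2
      · rw [e, b2] at a2
        cases a2
      · rw [e] at a3
        omega)
    (by
      rintro i ⟨hi, hi1, hi2⟩ j ⟨hj, hj1, hj2⟩
        (e : streamPos G r p D x i (t + 1) = streamPos G r p D x j (t + 1))
      rcases C i (t + 1) with ⟨a1, a2⟩ | ⟨a1, a2, a3⟩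
      · omega
      rcases C j (t + 1) with ⟨b1, b2⟩ | ⟨b1, b2, b3⟩
      · omega
      rw [e] at a3
      omega)
    (by
      rintro i ⟨hi, hi1, hi2⟩ j ⟨hj, hj1, hj2⟩
        (e : streamPos G r p D x i t = streamPos G r p D x j (t + 1))
      rcases C j (t + 1) with ⟨b1, b2⟩ | ⟨b1, b2, b3⟩
      · omega
      rcases C i t with ⟨a1, a2⟩ | ⟨a1, a2, a3⟩
      · rw [← e, a2] at b2
        cases b2
      · rw [e] at a3
        omega)
  refine ⟨τ, ⟨hτ, fun s hs => ?_⟩, fun i hi ht => ?_⟩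
  · change CanSwap G s (τ s)
    by_contra hcon
    refine hs (hfix s fun i hi => ⟨?_, ?_⟩)
    · rintro rfl
      rw [hf i hi] at hcon
      exact hcon (canSwap_streamPos hadj hp hi.2.1 hi.2.2)
    · rintro rfl
      rw [hg i hi] at hcon
      exact hcon (canSwap_streamPos hadj hp hi.2.1 hi.2.2).symm
  · by_cases hI : i ∈ I
    · exact hf i hI
    · -- The token is still waiting after this round, or it has just reached the root.
      have hI' : t + 1 + G.dist (x i) r < D + 2 * i ∨ t = D + 2 * i := by
        by_contra hc
        exact hI ⟨hi, by omega, by omega⟩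
      have hstay : streamPos G r p D x i (t + 1) = streamPos G r p D x i t := by
        rcases hI' with h | h
        · simp [streamPos, h, show t + G.dist (x i) r < D + 2 * i by omega]
        · rcases C i t with ⟨a1, a2⟩ | ⟨a1, a2, a3⟩
          · omega
          rcases C i (t + 1) with ⟨b1, b2⟩ | ⟨b1, b2, b3⟩
          · omega
          rw [show D + 2 * i - t = 0 by omega, hG.dist_eq_zero_iff] at a3
          rw [show D + 2 * i - (t + 1) = 0 by omega, hG.dist_eq_zero_iff] at b3
          exact Prod.ext (b3.trans a3.symm) (b2.trans a2.symm)
      rw [hstay]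
      refine hfix _ fun j hj => ?_
      obtain ⟨hj0, hj1, hj2⟩ := hj
      have hne : i ≠ j := by rintro rfl; exact hI ⟨hj0, hj1, hj2⟩
      have hxne : x i ≠ x j := fun e => hne (hx i hi j hj0 e)
      constructor
      · intro (e : streamPos G r p D x i t = streamPos G r p D x j t)
        rcases C i t with ⟨a1, a2⟩ | ⟨a1, a2, a3⟩ <;> rcases C j t with ⟨b1, b2⟩ | ⟨b1, b2, b3⟩
        · rw [a2, b2] at e
          exact hxne (congrArg Prod.fst e)
        · rw [← e, a2] at b2
          cases b2
        · rw [e, b2] at a2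
          cases a2
        · rw [e] at a3
          omega
      · intro (e : streamPos G r p D x i t = streamPos G r p D x j (t + 1))
        rcases C j (t + 1) with ⟨b1, b2⟩ | ⟨b1, b2, b3⟩
        · omega
        rcases C i t with ⟨a1, a2⟩ | ⟨a1, a2, a3⟩
        · rw [← e, a2] at b2
          cases b2
        · rw [e] at a3
          omega

/-- When token `i` has been at the root for one round, token `i + 1` is in the data slot of a
neighbour of the root, or, if `x (i + 1) = r`, still waiting in the ancilla slot of the root. -/
lemma exists_meet (hG : G.Connected)
    (hp : ∀ v, G.dist (p v) r = G.dist v r - 1) (i : ℕ) :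
    CanSwap G (streamPos G r p D x i (D + 2 * i + 1))
      (streamPos G r p D x (i + 1) (D + 2 * i + 1)) := by
  rcases streamPos_cases (D := D) (x := x) hp i (D + 2 * i + 1) with ⟨a1, a2⟩ | ⟨a1, a2, a3⟩
  · omega
  have hr : (streamPos G r p D x i (D + 2 * i + 1)).1 = r := by
    rw [show D + 2 * i - (D + 2 * i + 1) = 0 by omega] at a3
    exact hG.dist_eq_zero_iff.1 a3
  rcases streamPos_cases (D := D) (x := x) hp (i + 1) (D + 2 * i + 1) with
    ⟨b1, b2⟩ | ⟨b1, b2, b3⟩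
  · left
    rw [hr, b2]
    exact hG.dist_eq_zero_iff.1 (show G.dist (x (i + 1)) r = 0 by omega)
  · right
    refine ⟨a2, b2, ?_⟩
    rw [hr]
    refine (SimpleGraph.dist_eq_one_iff_adj.1 ?_).symm
    omega

end Stream

/-! ### Routing a chain of swaps -/

/-- Routing a chain of consecutive swaps: the streaming rounds together with the meeting swaps,
followed by the streaming rounds in reverse. -/
lemma routable_chain {V : Type*} [DecidableEq V] {G : SimpleGraph V} (hG : G.Connected) {r : V}
    {D n : ℕ} {x : ℕ → V} {c : ℕ → Equiv.Perm V} (hD : ∀ v, G.dist v r < D) (h0 : c 0 = 1)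
    (hc : ∀ i < n, c (i + 1) = c i ∨ c (i + 1) = Equiv.swap (x i) (x (i + 1)) * c i)
    (hx : ∀ i ≤ n, ∀ j ≤ n, x i = x j → i = j) :
    ∃ U : Equiv.Perm (Slot V), Routable G (2 * D + 2 + 5 * n) U ∧
      ∀ v, U (v, true) = (c n v, true) := by
  obtain ⟨p, hp, hadj⟩ := exists_parent hG r
  choose W hW hWpos using exists_step_s4 (D := D) hG hadj hp hx
  let P : ℕ → Equiv.Perm (Slot V) := fun t => Nat.rec 1 (fun s A => W s * A) t
  have hP : ∀ t, P (t + 1) = W t * P t := fun t => rfl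
  have hPR : ∀ t, Routable G t (P t) := by
    intro t
    induction t with
    | zero => exact Routable.one
    | succ t ih => exact ((Routable.of_round (hW t)).mul ih).mono (by omega)
  have hPpos : ∀ i ≤ n, ∀ t ≤ D + 2 * i + 1, P t (x i, true) = streamPos G r p D x i t := by
    intro i hi t
    induction t with
    | zero =>
      intro _
      have := hD (x i)
      simp [P, streamPos, show G.dist (x i) r < D + 2 * i by omega]
    | succ t ih =>
      intro ht
      rw [hP, Equiv.Perm.mul_apply, ih (by omega), hWpos t i hi (by omega)]
  have main : ∀ i ≤ n, ∃ U : Equiv.Perm (Slot V),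
      Routable G (D + 1 + 3 * i) (P (D + 2 * i + 1) * U) ∧ ∀ v, U (v, true) = (c i v, true) := by
    intro i
    induction i with
    | zero => exact fun _ => ⟨1, by simpa using hPR (D + 1), by simp [h0]⟩
    | succ i ih =>
      intro hi
      obtain ⟨U, hU, hUv⟩ := ih (by omega)
      have hPP : P (D + 2 * (i + 1) + 1)
          = W (D + 2 * i + 2) * (W (D + 2 * i + 1) * P (D + 2 * i + 1)) := rfl
      have hWW := fun (A : Equiv.Perm (Slot V)) (m : ℕ) (hA : Routable G m A) =>
        (Routable.of_round (hW (D + 2 * i + 2))).mul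
          ((Routable.of_round (hW (D + 2 * i + 1))).mul hA)
      rcases hc i (by omega) with e | e
      · refine ⟨U, ?_, by rwa [e]⟩
        rw [hPP]
        simpa only [mul_assoc] using (hWW _ _ hU).mono (by omega)
      · refine ⟨Equiv.swap (x i, true) (x (i + 1), true) * U, ?_, ?_⟩
        · -- The swap of initial slots is the meeting swap conjugated by the rounds so far.
          have hconj : P (D + 2 * i + 1) * Equiv.swap (x i, true) (x (i + 1), true)
              = Equiv.swap (streamPos G r p D x i (D + 2 * i + 1))
                  (streamPos G r p D x (i + 1) (D + 2 * i + 1)) * P (D + 2 * i + 1) := by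
            rw [Equiv.mul_swap_eq_swap_mul, hPpos i (by omega) _ le_rfl,
              hPpos (i + 1) hi (D + 2 * i + 1) (by omega)]
          have hR := hWW _ _ ((Routable.of_round
            (isAncillaRound_swap (exists_meet (D := D) (x := x) hG hp i))).mul hU)
          rw [hPP]
          rw [← mul_assoc _ _ U, ← hconj] at hR
          simpa only [mul_assoc] using hR.mono (by omega)
        · intro v
          rw [Equiv.Perm.mul_apply, hUv, e, Equiv.Perm.mul_apply]
          exact (Function.Injective.map_swap (f := fun v : V => (v, true))
            (fun a b h => by simpa using h) _ _ _).symm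
  obtain ⟨U, hU, hUv⟩ := main n le_rfl
  refine ⟨U, ?_, hUv⟩
  have := (hPR (D + 2 * n + 1)).inv.mul hU
  rw [inv_mul_cancel_left] at this
  exact this.mono (by omega)

/-- Sparse routing with ancillas: there is a universal constant `C` such that for every
finite connected simple graph `G` and every permutation `π` moving at most `k` tokens,
there is a sequence of at most `C·(diam(G) + k)` ancilla rounds whose composition sends
the data slot of each `v` to the data slot of `π v`. -/
theorem sparse_routing_with_ancillas :
    ∃ C : ℝ, 0 < C ∧ ∀ (V : Type) (_ : Fintype V) (_ : DecidableEq V)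
      (G : SimpleGraph V), G.Connected →
      ∀ (k : ℕ) (π : Equiv.Perm V),
        (Finset.univ.filter fun v => π v ≠ v).card ≤ k →
        ∃ L : List (Equiv.Perm (Slot V)),
          (∀ τ ∈ L, IsAncillaRound G τ) ∧
          (∀ v : V, L.prod (v, false) = (π v, false)) ∧
          (L.length : ℝ) ≤ C * ((G.diam : ℝ) + (k : ℝ)) := by
  refine ⟨11, by norm_num, fun V _ _ G hG k π hk => ?_⟩
  -- For `π = 1` the bound may be `0` (if `k = 0` and `diam G = 0`), so no round may be used.
  by_cases h1 : π = 1
  · exact ⟨[], by simp, by simp [h1], by simp; positivity⟩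
  obtain ⟨a, ha⟩ : ∃ a, π a ≠ a := by
    by_contra! hall
    exact h1 (Equiv.ext hall)
  have hsupp : insert a π.support = Finset.univ.filter fun v => π v ≠ v := by
    ext v
    simp only [Finset.mem_insert, Equiv.Perm.mem_support, Finset.mem_filter, Finset.mem_univ,
      true_and]
    grind
  obtain ⟨n, x, c, h0, hc, hn, hx, hmem, -⟩ := exists_chain _ π a le_rfl
  -- `x` maps `{0, …, n}` injectively into the support of `π`.
  have hnk : n + 1 ≤ k := by
    refine le_trans ?_ hk
    rw [← hsupp, ← Finset.card_range (n + 1)]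
    refine Finset.card_le_card_of_injOn x (fun i hi => ?_) (fun i hi j hj e => ?_)
    · exact hmem i (by simp at hi; omega)
    · simp only [Finset.coe_range, Set.mem_Iio] at hi hj
      exact hx i (by omega) j (by omega) e
  have hD : ∀ v, G.dist v a < G.diam + 1 := by
    have : Nonempty V := ⟨a⟩
    intro v
    exact Nat.lt_succ_of_le (SimpleGraph.dist_le_diam (SimpleGraph.connected_iff_ediam_ne_top.1 hG))
  obtain ⟨U, hU, hUv⟩ := routable_chain hG hD h0 hc hx
  -- `U` acts on ancilla slots; conjugating by the exchange of data and ancillas moves it to data.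
  have hF := Routable.of_round (isAncillaRound_flipAll G)
  obtain ⟨L, hL, hprod, hlen⟩ := hF.mul (hU.mul hF)
  refine ⟨L, hL, fun v => ?_, ?_⟩
  · rw [hprod]
    simp [flipAll, hUv, hn]
  · have : L.length ≤ 11 * (G.diam + k) := by omega
    exact_mod_cast this
end
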